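/- Fix integers n ≥ 1 and 1 ≤ m₀ ≤ n. For each m₀ ≤ m ≤ n let F_m : {0,1}^m → {0,1}^m be a pairwise independent random function, with F_{m₀},…,F_n mutually independent, and define the random maps r^m by the downward recursion r^{n+1} = id and r^m(x) = r^{m+1}(F_m(MSB_m(x)) ‖ LSB_{n−m}(x)). For x ≠ y in {0,1}^n and m₀ ≤ m ≤ n+1 write p^m_{x,y} := Pr[r^m(x) = r^m(y)] (so p^{n+1}_{x,y} = 0). Then for all m₀ ≤ m ≤ n: (a) if LSB_{n−m}(x) ≠ LSB_{n−m}(y) then p^m_{x,y} = p^{m+1}_{x,y}, while if LSB_{n−m}(x) = LSB_{n−m}(y) then p^m_{x,y} = 2^{−m} + (1 − 2^{−m})·p^{m+1}_{x,y}; and (b) for any x' ≠ y' in {0,1}^n with LSB_{n−m}(x') = LSB_{n−m}(x) and LSB_{n−m}(y') = LSB_{n−m}(y), one has p^m_{x,y} = p^m_{x',y'}. -/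

import Mathlib

open scoped BigOperators Classical

/-- Probability of an event under a (finite, weighted) probability mass function. -/
noncomputable def pr {Ω : Type*} [Fintype Ω] (p : Ω → ℝ) (E : Ω → Prop) : ℝ :=
  ∑ ω, if E ω then p ω else 0

/-- The `m` most significant bits of an `n`-bit string (index `0` is most significant). -/
def msb {n : ℕ} (m : ℕ) (h : m ≤ n) (x : Fin n → Bool) : Fin m → Bool :=
  fun s => x ⟨s.1, lt_of_lt_of_le s.2 h⟩

/-- The `k` least significant bits of an `n`-bit string (junk `false` if `k > n`;
in all uses below `k ≤ n`). -/
def lsb {n : ℕ} (k : ℕ) (x : Fin n → Bool) : Fin k → Bool :=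
  fun s => if h : n - k + (s : ℕ) < n then x ⟨n - k + s.1, h⟩ else false

/-- Replace the `m` most significant bits of `x` by `f m` applied to them,
keeping the `n - m` least significant bits: this is `f_m(MSB_m(x)) ‖ LSB_{n-m}(x)`. -/
def rStep (n : ℕ) (f : ∀ m : ℕ, (Fin m → Bool) → (Fin m → Bool)) (m : ℕ) (h : m ≤ n)
    (x : Fin n → Bool) : Fin n → Bool :=
  fun t => if ht : (t : ℕ) < m then f m (msb m h x) ⟨t.1, ht⟩ else x t

/-- The downward recursion `r^{n+1} = id`, `r^m(x) = r^{m+1}(f_m(MSB_m(x)) ‖ LSB_{n-m}(x))`. -/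
def rRec (n : ℕ) (f : ∀ m : ℕ, (Fin m → Bool) → (Fin m → Bool)) (m : ℕ)
    (x : Fin n → Bool) : Fin n → Bool :=
  if h : m ≤ n then rRec n f (m + 1) (rStep n f m h x) else x
termination_by n + 1 - m
decreasing_by omega

/-!
Each level either merges two distinct labels or leaves two distinct labels with the same low bits,
and which of the two happens is independent of the levels after it. Level `i` can only merge labels
agreeing on their `n - i` low bits, and then does so with probability `ε i = 2 ^ (-i)`. Hence the
probability of no collision is the product of `1 - ε i` over the levels `i ≥ m` at which `x` and `y`
have the same `n - i` low bits. Both the recursion and the dependence on the low bits alone can be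
read off this product.
-/

section Probability

variable {Ω : Type*} [Fintype Ω] {p : Ω → ℝ}

theorem pr_congr {E E' : Ω → Prop} (h : ∀ ω, E ω ↔ E' ω) : pr p E = pr p E' :=
  congrArg (pr p) (funext fun ω => propext (h ω))

theorem pr_eq_zero {E : Ω → Prop} (h : ∀ ω, ¬ E ω) : pr p E = 0 := by
  simp [pr, h]

theorem pr_eq_one (hp1 : ∑ ω, p ω = 1) {E : Ω → Prop} (h : ∀ ω, E ω) : pr p E = 1 := by
  simp [pr, h, hp1]

theorem pr_not (hp1 : ∑ ω, p ω = 1) (E : Ω → Prop) : pr p (fun ω => ¬ E ω) = 1 - pr p E := by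
  rw [← hp1, pr, pr, ← Finset.sum_sub_distrib]
  refine Finset.sum_congr rfl fun ω _ => ?_
  by_cases h : E ω <;> simp [h]

theorem pr_eq_sum_pr_and {α : Type*} [Fintype α] (X : Ω → α) (E : Ω → Prop) :
    pr p E = ∑ a, pr p (fun ω => X ω = a ∧ E ω) := by
  unfold pr
  rw [Finset.sum_comm]
  refine Finset.sum_congr rfl fun ω _ => ?_
  by_cases h : E ω <;> simp [h]

theorem sum_pr_eq (hp1 : ∑ ω, p ω = 1) {α : Type*} [Fintype α] (X : Ω → α) :
    ∑ a, pr p (fun ω => X ω = a) = 1 := by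
  simpa [pr_eq_one hp1] using (pr_eq_sum_pr_and (p := p) X fun _ => True).symm

theorem pr_comp_eq_sum {α : Type*} [Fintype α] (X : Ω → α) (P : α → Prop)
    [DecidablePred P] :
    pr p (fun ω => P (X ω)) = ∑ a, if P a then pr p (fun ω => X ω = a) else 0 := by
  rw [pr_eq_sum_pr_and X]
  refine Finset.sum_congr rfl fun a _ => ?_
  split_ifs with h
  · exact pr_congr fun ω => ⟨And.left, fun hω => ⟨hω, hω ▸ h⟩⟩
  · exact pr_eq_zero fun ω hω => h (hω.1 ▸ hω.2)

theorem pr_comp₂_eq_sum {α β : Type*} [Fintype α] [Finite β] {X : Ω → α} {Y : Ω → β}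
    (hXY : ∀ a b, pr p (fun ω => X ω = a ∧ Y ω = b)
      = pr p (fun ω => X ω = a) * pr p (fun ω => Y ω = b))
    (R : α → β → Prop) :
    pr p (fun ω => R (X ω) (Y ω))
      = ∑ a, pr p (fun ω => X ω = a) * pr p (fun ω => R a (Y ω)) := by
  have := Fintype.ofFinite β
  rw [pr_comp_eq_sum (fun ω => (X ω, Y ω)) (fun c => R c.1 c.2), Fintype.sum_prod_type]
  refine Finset.sum_congr rfl fun a _ => ?_
  rw [pr_comp_eq_sum Y (R a), Finset.mul_sum]
  refine Finset.sum_congr rfl fun b _ => ?_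
  simp only [Prod.mk.injEq, hXY, mul_ite, mul_zero]

theorem pr_eq_of_pr_and_eq {α : Type*} [Fintype α] {X Y : Ω → α} {c : ℝ}
    (h : ∀ a b, pr p (fun ω => X ω = a ∧ Y ω = b) = c) :
    pr p (fun ω => X ω = Y ω) = Fintype.card α * c := by
  have hfiber (a : α) : pr p (fun ω => X ω = a ∧ X ω = Y ω) = c := by
    rw [← h a a]
    exact pr_congr fun ω => and_congr_right fun hX => by rw [hX, eq_comm]
  simp [pr_eq_sum_pr_and X fun ω => X ω = Y ω, hfiber]

end Probability

section Independence

variable {Ω ι : Type*} [Fintype Ω] {p : Ω → ℝ} {V : ι → Type*} {F : ∀ i, Ω → V i}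

/-- Mutual independence of the random variables `F i`, `i ∈ s`, expressed through the point
probabilities of their joint law, which suffices for variables with finitely many values. -/
def MutuallyIndep (p : Ω → ℝ) (F : ∀ i, Ω → V i) (s : Finset ι) : Prop :=
  ∀ g : ∀ i, V i,
    pr p (fun ω => ∀ i ∈ s, F i ω = g i) = ∏ i ∈ s, pr p (fun ω => F i ω = g i)

namespace MutuallyIndep

variable {a : ι} {s t : Finset ι}

section Insert

variable [DecidableEq ι]

theorem pr_eq_and_forall_eq (h : MutuallyIndep p F (insert a s)) (ha : a ∉ s) (b : V a)
    (g : ∀ i, V i) :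
    pr p (fun ω => F a ω = b ∧ ∀ i ∈ s, F i ω = g i)
      = pr p (fun ω => F a ω = b) * ∏ i ∈ s, pr p (fun ω => F i ω = g i) := by
  have hg : ∀ i ∈ s, Function.update g a b i = g i := fun i hi =>
    Function.update_of_ne (ne_of_mem_of_not_mem hi ha) b g
  have hupdate := h (Function.update g a b)
  rw [Finset.prod_insert ha, Function.update_self,
    Finset.prod_congr rfl fun i hi => by rw [hg i hi]] at hupdate
  rw [← hupdate]
  refine pr_congr fun ω => ?_
  rw [Finset.forall_mem_insert, Function.update_self]
  exact and_congr_right fun _ => forall₂_congr fun i hi => by rw [hg i hi]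

theorem of_insert [Finite (V a)] (hp1 : ∑ ω, p ω = 1) (h : MutuallyIndep p F (insert a s)) :
    MutuallyIndep p F s := by
  by_cases ha : a ∈ s
  · rwa [Finset.insert_eq_of_mem ha] at h
  · intro g
    have := Fintype.ofFinite (V a)
    rw [pr_eq_sum_pr_and (F a)]
    simp only [h.pr_eq_and_forall_eq ha]
    rw [← Finset.sum_mul, sum_pr_eq hp1, one_mul]

theorem pr_eq_and_domRestrict_eq [Finite (V a)] (hp1 : ∑ ω, p ω = 1)
    (h : MutuallyIndep p F (insert a s)) (ha : a ∉ s) (b : V a) (c : ∀ i : (s : Set ι), V i) :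
    pr p (fun ω => F a ω = b ∧ (s : Set ι).domRestrict (F · ω) = c)
      = pr p (fun ω => F a ω = b) * pr p (fun ω => (s : Set ι).domRestrict (F · ω) = c) := by
  by_cases hc : ∃ ω₀, (s : Set ι).domRestrict (F · ω₀) = c
  · obtain ⟨ω₀, rfl⟩ := hc
    have hrestrict (ω : Ω) : (s : Set ι).domRestrict (F · ω) = (s : Set ι).domRestrict (F · ω₀) ↔
        ∀ i ∈ s, F i ω = F i ω₀ := by
      simp [funext_iff]
    simp only [hrestrict]
    rw [h.pr_eq_and_forall_eq ha b (F · ω₀), h.of_insert hp1 (F · ω₀)]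
  · push Not at hc
    rw [pr_eq_zero fun ω hω => hc ω hω.2, pr_eq_zero hc, mul_zero]

theorem pr_eq_sum_mul [Fintype (V a)] [∀ i, Finite (V i)] (hp1 : ∑ ω, p ω = 1)
    (h : MutuallyIndep p F (insert a s)) (ha : a ∉ s)
    {R : V a → (∀ i, V i) → Prop} (hR : ∀ b, DependsOn (R b) s) :
    pr p (fun ω => R (F a ω) (F · ω))
      = ∑ b, pr p (fun ω => F a ω = b) * pr p (fun ω => R b (F · ω)) := by
  choose R' hR' using fun b => dependsOn_iff_exists_comp.1 (hR b)
  simp only [hR', Function.comp_apply]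
  exact pr_comp₂_eq_sum (h.pr_eq_and_domRestrict_eq hp1 ha) R'

end Insert

theorem mono [∀ i, Finite (V i)] (hp1 : ∑ ω, p ω = 1) (h : MutuallyIndep p F s)
    (hts : t ⊆ s) : MutuallyIndep p F t := by
  suffices ∀ u, MutuallyIndep p F (u ∪ t) → MutuallyIndep p F t from
    this s (by rwa [Finset.union_eq_left.2 hts])
  intro u
  induction u using Finset.induction with
  | empty => simp
  | insert a u _ ih =>
    rw [Finset.insert_union]
    exact fun hu => ih (hu.of_insert hp1)

end MutuallyIndep

end Independence

section Bits

variable {n m : ℕ} {x y : Fin n → Bool}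

theorem lsb_eq_lsb_iff {k : ℕ} :
    lsb k x = lsb k y ↔ ∀ t : Fin n, n - k ≤ t → x t = y t := by
  constructor
  · intro h t ht
    have hts : n - k + (t - (n - k)) = t := by omega
    simpa [lsb, hts] using congrFun h ⟨t - (n - k), by omega⟩
  · intro h
    funext s
    unfold lsb
    split_ifs with hs
    · exact h _ (Nat.le_add_right _ _)
    · rfl

theorem lsb_eq_lsb_of_le {j k : ℕ} (hjk : j ≤ k) (h : lsb k x = lsb k y) : lsb j x = lsb j y :=
  lsb_eq_lsb_iff.2 fun t ht => lsb_eq_lsb_iff.1 h t (by omega)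

theorem eq_iff_msb_eq_and_lsb_eq (hm : m ≤ n) :
    x = y ↔ msb m hm x = msb m hm y ∧ lsb (n - m) x = lsb (n - m) y := by
  refine ⟨by rintro rfl; exact ⟨rfl, rfl⟩, fun ⟨hmsb, hlsb⟩ => funext fun t => ?_⟩
  by_cases ht : (t : ℕ) < m
  · exact congrFun hmsb ⟨t, ht⟩
  · exact lsb_eq_lsb_iff.1 hlsb t (by omega)

/-- `h(MSB_m(x)) ‖ LSB_{n-m}(x)`: one level of the recursion, as a function of the map `h` used at
that level only. -/
def replaceMsb (hm : m ≤ n) (h : (Fin m → Bool) → (Fin m → Bool)) (x : Fin n → Bool) :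
    Fin n → Bool :=
  fun t => if ht : (t : ℕ) < m then h (msb m hm x) ⟨t, ht⟩ else x t

theorem msb_replaceMsb (hm : m ≤ n) (h : (Fin m → Bool) → (Fin m → Bool)) (x : Fin n → Bool) :
    msb m hm (replaceMsb hm h x) = h (msb m hm x) := by
  funext s
  simp [msb, replaceMsb]

theorem lsb_replaceMsb (hm : m ≤ n) (h : (Fin m → Bool) → (Fin m → Bool)) (x : Fin n → Bool) :
    lsb (n - m) (replaceMsb hm h x) = lsb (n - m) x :=
  lsb_eq_lsb_iff.2 fun t ht => dif_neg (by omega)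

theorem replaceMsb_eq_replaceMsb_iff (hm : m ≤ n) (h : (Fin m → Bool) → (Fin m → Bool)) :
    replaceMsb hm h x = replaceMsb hm h y ↔
      h (msb m hm x) = h (msb m hm y) ∧ lsb (n - m) x = lsb (n - m) y := by
  simp only [eq_iff_msb_eq_and_lsb_eq hm, msb_replaceMsb, lsb_replaceMsb]

theorem rRec_of_le (f : ∀ m : ℕ, (Fin m → Bool) → (Fin m → Bool)) (hm : m ≤ n)
    (x : Fin n → Bool) : rRec n f m x = rRec n f (m + 1) (replaceMsb hm (f m) x) := by
  rw [rRec, dif_pos hm]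
  rfl

theorem rRec_of_lt (f : ∀ m : ℕ, (Fin m → Bool) → (Fin m → Bool)) (hm : n < m)
    (x : Fin n → Bool) : rRec n f m x = x := by
  rw [rRec, dif_neg hm.not_ge]

theorem dependsOn_rRec (m : ℕ) (x : Fin n → Bool) :
    DependsOn (fun f => rRec n f m x) (Finset.Icc m n) := by
  intro f g hfg
  induction m, x using rRec.induct n f with
  | case1 m x hm ih =>
    have hfgm : f m = g m := hfg m (by simp [hm])
    simp only [rRec_of_le _ hm, ← hfgm]
    exact ih fun i hi => hfg i (Finset.Icc_subset_Icc_left m.le_succ hi)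
  | case2 m x hm => simp only [rRec_of_lt _ (not_le.1 hm)]

end Bits

section Collision

variable {Ω : Type*} [Fintype Ω] {p : Ω → ℝ} {n m m₀ : ℕ} {x y x' y' : Fin n → Bool} {ε : ℕ → ℝ}

/-- The probability that `x ≠ y` survive the levels `m, …, n` without colliding, when level `i`
merges two distinct labels with the same `n - i` low bits with probability `ε i`. -/
noncomputable def survivalProb (ε : ℕ → ℝ) (m : ℕ) (x y : Fin n → Bool) : ℝ :=
  ∏ i ∈ Finset.Icc m n, if lsb (n - i) x = lsb (n - i) y then 1 - ε i else 1

theorem survivalProb_of_lt (hm : n < m) : survivalProb ε m x y = 1 := by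
  simp [survivalProb, hm]

theorem survivalProb_of_le (hm : m ≤ n) :
    survivalProb ε m x y =
      (if lsb (n - m) x = lsb (n - m) y then 1 - ε m else 1) * survivalProb ε (m + 1) x y := by
  rw [survivalProb, ← Finset.insert_Icc_add_one_left_eq_Icc hm, Finset.prod_insert (by simp)]
  rfl

theorem survivalProb_congr (hx : lsb (n - m) x = lsb (n - m) x')
    (hy : lsb (n - m) y = lsb (n - m) y') : survivalProb ε m x y = survivalProb ε m x' y' := by
  refine Finset.prod_congr rfl fun i hi => ?_
  have him : n - i ≤ n - m := Nat.sub_le_sub_left (Finset.mem_Icc.1 hi).1 n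
  rw [lsb_eq_lsb_of_le him hx, lsb_eq_lsb_of_le him hy]

theorem pr_apply_eq_apply_of_pairwise {H : Ω → (Fin m → Bool) → (Fin m → Bool)}
    {a b : Fin m → Bool}
    (h : ∀ c d, pr p (fun ω => H ω a = c ∧ H ω b = d) = ((1 : ℝ) / 2 ^ m) ^ 2) :
    pr p (fun ω => H ω a = H ω b) = 1 / 2 ^ m := by
  have hcard : (Fintype.card (Fin m → Bool) : ℝ) = 2 ^ m := by simp
  rw [pr_eq_of_pr_and_eq h, hcard]
  field_simp

theorem pr_replaceMsb_ne (hp1 : ∑ ω, p ω = 1) (hm : m ≤ n)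
    {H : Ω → (Fin m → Bool) → (Fin m → Bool)} {δ : ℝ}
    (hH : ∀ a b, a ≠ b → pr p (fun ω => H ω a = H ω b) = δ) (hxy : x ≠ y) :
    pr p (fun ω => replaceMsb hm (H ω) x ≠ replaceMsb hm (H ω) y) =
      if lsb (n - m) x = lsb (n - m) y then 1 - δ else 1 := by
  simp only [ne_eq, replaceMsb_eq_replaceMsb_iff]
  split_ifs with hlsb
  · have hmsb : msb m hm x ≠ msb m hm y := fun hmsb =>
      hxy ((eq_iff_msb_eq_and_lsb_eq hm).2 ⟨hmsb, hlsb⟩)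
    simp only [hlsb, and_true]
    rw [pr_not hp1, hH _ _ hmsb]
  · exact pr_eq_one hp1 fun ω hω => hlsb hω.2

variable {F : ∀ m : ℕ, Ω → (Fin m → Bool) → (Fin m → Bool)}

theorem pr_rRec_ne_eq_sum (hp1 : ∑ ω, p ω = 1) (hF : MutuallyIndep p F (Finset.Icc m n))
    (hm : m ≤ n) (x y : Fin n → Bool) :
    pr p (fun ω => rRec n (F · ω) m x ≠ rRec n (F · ω) m y) =
      ∑ h, pr p (fun ω => F m ω = h) * pr p (fun ω =>
        rRec n (F · ω) (m + 1) (replaceMsb hm h x)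
          ≠ rRec n (F · ω) (m + 1) (replaceMsb hm h y)) := by
  simp only [rRec_of_le _ hm]
  rw [← Finset.insert_Icc_add_one_left_eq_Icc hm] at hF
  refine hF.pr_eq_sum_mul hp1 (by simp) (R := fun h f =>
    rRec n f (m + 1) (replaceMsb hm h x) ≠ rRec n f (m + 1) (replaceMsb hm h y))
    fun h f g hfg => ?_
  have hrRec (z : Fin n → Bool) : rRec n f (m + 1) z = rRec n g (m + 1) z :=
    dependsOn_rRec (m + 1) z hfg
  simp only [hrRec]

theorem pr_rRec_ne_eq_mul (hp1 : ∑ ω, p ω = 1) (hF : MutuallyIndep p F (Finset.Icc m n))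
    (hm : m ≤ n) {c : ℝ}
    (hc : ∀ h, replaceMsb hm h x ≠ replaceMsb hm h y →
      pr p (fun ω => rRec n (F · ω) (m + 1) (replaceMsb hm h x)
        ≠ rRec n (F · ω) (m + 1) (replaceMsb hm h y)) = c) :
    pr p (fun ω => rRec n (F · ω) m x ≠ rRec n (F · ω) m y) =
      pr p (fun ω => replaceMsb hm (F m ω) x ≠ replaceMsb hm (F m ω) y) * c := by
  rw [pr_rRec_ne_eq_sum hp1 hF hm,
    pr_comp_eq_sum (F m) fun h => replaceMsb hm h x ≠ replaceMsb hm h y, Finset.sum_mul]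
  refine Finset.sum_congr rfl fun h _ => ?_
  split_ifs with hne
  · rw [hc h hne]
  · have hzero : pr p (fun ω => rRec n (F · ω) (m + 1) (replaceMsb hm h x)
        ≠ rRec n (F · ω) (m + 1) (replaceMsb hm h y)) = 0 :=
      pr_eq_zero fun ω hω => hne fun heq => hω (by rw [heq])
    rw [hzero, mul_zero, zero_mul]

theorem pr_rRec_ne (hp1 : ∑ ω, p ω = 1)
    (hε : ∀ i ∈ Finset.Icc m n, ∀ a b : Fin i → Bool, a ≠ b →
      pr p (fun ω => F i ω a = F i ω b) = ε i)
    (hF : MutuallyIndep p F (Finset.Icc m n)) (hm : m ≤ n + 1) (hxy : x ≠ y) :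
    pr p (fun ω => rRec n (F · ω) m x ≠ rRec n (F · ω) m y) = survivalProb ε m x y := by
  induction hm using Nat.decreasingInduction generalizing x y with
  | self =>
    rw [survivalProb_of_lt n.lt_succ_self]
    exact pr_eq_one hp1 fun ω => by simpa only [rRec_of_lt _ n.lt_succ_self] using hxy
  | of_succ m hm ih =>
    have hmn : m ≤ n := Nat.lt_succ_iff.1 hm
    have hsub : Finset.Icc (m + 1) n ⊆ Finset.Icc m n := Finset.Icc_subset_Icc_left m.le_succ
    rw [survivalProb_of_le hmn,
      ← pr_replaceMsb_ne hp1 hmn (hε m (Finset.left_mem_Icc.2 hmn)) hxy]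
    refine pr_rRec_ne_eq_mul hp1 hF hmn fun h hne => ?_
    have hlsb (z : Fin n → Bool) : lsb (n - (m + 1)) (replaceMsb hmn h z) = lsb (n - (m + 1)) z :=
      lsb_eq_lsb_of_le (by omega) (lsb_replaceMsb hmn h z)
    rw [ih (fun i hi => hε i (hsub hi)) (hF.mono hp1 hsub) hne,
      survivalProb_congr (hlsb x) (hlsb y)]

theorem pr_rRec_eq (hp1 : ∑ ω, p ω = 1)
    (hε : ∀ i ∈ Finset.Icc m n, ∀ a b : Fin i → Bool, a ≠ b →
      pr p (fun ω => F i ω a = F i ω b) = ε i)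
    (hF : MutuallyIndep p F (Finset.Icc m n)) (hm : m ≤ n + 1) (hxy : x ≠ y) :
    pr p (fun ω => rRec n (F · ω) m x = rRec n (F · ω) m y) = 1 - survivalProb ε m x y := by
  rw [← pr_rRec_ne hp1 hε hF hm hxy, pr_not hp1, sub_sub_cancel]

theorem statement5_general (hp1 : ∑ ω, p ω = 1)
    (hε : ∀ m ∈ Finset.Icc m₀ n, ∀ a b : Fin m → Bool, a ≠ b →
      pr p (fun ω => F m ω a = F m ω b) = ε m)
    (hF : MutuallyIndep p F (Finset.Icc m₀ n)) :
    (∀ x y : Fin n → Bool, x ≠ y →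
      pr p (fun ω => rRec n (F · ω) (n + 1) x = rRec n (F · ω) (n + 1) y) = 0) ∧
    ∀ m, m₀ ≤ m → m ≤ n → ∀ x y : Fin n → Bool, x ≠ y →
      ((lsb (n - m) x ≠ lsb (n - m) y →
          pr p (fun ω => rRec n (F · ω) m x = rRec n (F · ω) m y)
            = pr p (fun ω => rRec n (F · ω) (m + 1) x = rRec n (F · ω) (m + 1) y)) ∧
        (lsb (n - m) x = lsb (n - m) y →
          pr p (fun ω => rRec n (F · ω) m x = rRec n (F · ω) m y)
            = ε m + (1 - ε m) *
                pr p (fun ω => rRec n (F · ω) (m + 1) x = rRec n (F · ω) (m + 1) y)) ∧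
        (∀ x' y' : Fin n → Bool, x' ≠ y' →
          lsb (n - m) x' = lsb (n - m) x → lsb (n - m) y' = lsb (n - m) y →
          pr p (fun ω => rRec n (F · ω) m x = rRec n (F · ω) m y)
            = pr p (fun ω => rRec n (F · ω) m x' = rRec n (F · ω) m y'))) := by
  have hclosed {k : ℕ} (hk₀ : m₀ ≤ k) (hk : k ≤ n + 1) {x y : Fin n → Bool} (hxy : x ≠ y) :
      pr p (fun ω => rRec n (F · ω) k x = rRec n (F · ω) k y) = 1 - survivalProb ε k x y := by
    have hsub : Finset.Icc k n ⊆ Finset.Icc m₀ n := Finset.Icc_subset_Icc_left hk₀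
    exact pr_rRec_eq hp1 (fun i hi => hε i (hsub hi)) (hF.mono hp1 hsub) hk hxy
  refine ⟨fun x y hxy => pr_eq_zero fun ω => ?_, fun m hm₀ hm x y hxy => ?_⟩
  · simpa only [rRec_of_lt _ n.lt_succ_self] using hxy
  rw [hclosed hm₀ (by omega) hxy, hclosed (by omega : m₀ ≤ m + 1) (by omega) hxy]
  refine ⟨fun hne => ?_, fun heq => ?_, fun x' y' hxy' hx hy => ?_⟩
  · rw [survivalProb_of_le hm, if_neg hne, one_mul]
  · rw [survivalProb_of_le hm, if_pos heq]
    ring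
  · rw [hclosed hm₀ (by omega) hxy', survivalProb_congr hx hy]

end Collision

/-- Recursive structure of the collision probabilities
`p^m_{x,y} = Pr[r^m(x) = r^m(y)]` of the multi-cut labelling maps: `p^{n+1}_{x,y} = 0`;
if `LSB_{n-m}(x) ≠ LSB_{n-m}(y)` then `p^m = p^{m+1}`, while if they agree then
`p^m = 2^{-m} + (1 - 2^{-m}) p^{m+1}`; moreover `p^m_{x,y}` depends only on
`LSB_{n-m}(x)` and `LSB_{n-m}(y)`. -/
theorem statement5
    (n m₀ : ℕ) (hn : 1 ≤ n) (hm₀ : 1 ≤ m₀) (hm₀n : m₀ ≤ n)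
    (Ω : Type*) [Fintype Ω] (p : Ω → ℝ)
    (hp0 : ∀ ω, 0 ≤ p ω) (hp1 : ∑ ω, p ω = 1)
    (F : ∀ m : ℕ, Ω → (Fin m → Bool) → (Fin m → Bool))
    -- each `F m` (for `m₀ ≤ m ≤ n`) is a pairwise independent random function
    (hFpair : ∀ m, m₀ ≤ m → m ≤ n → ∀ x y : Fin m → Bool, x ≠ y →
      ∀ a b : Fin m → Bool,
        pr p (fun ω => F m ω x = a ∧ F m ω y = b) = ((1 : ℝ) / 2 ^ m) ^ 2)
    -- `F_{m₀}, …, F_n` are mutually independent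
    (hInd : ∀ g : ∀ m : ℕ, (Fin m → Bool) → (Fin m → Bool),
      pr p (fun ω => ∀ m ∈ Finset.Icc m₀ n, F m ω = g m)
        = ∏ m ∈ Finset.Icc m₀ n, pr p (fun ω => F m ω = g m)) :
    (∀ x y : Fin n → Bool, x ≠ y →
      pr p (fun ω => rRec n (fun m' => F m' ω) (n + 1) x
          = rRec n (fun m' => F m' ω) (n + 1) y) = 0) ∧
    ∀ m, m₀ ≤ m → m ≤ n → ∀ x y : Fin n → Bool, x ≠ y →
      ((lsb (n - m) x ≠ lsb (n - m) y →
          pr p (fun ω => rRec n (fun m' => F m' ω) m x = rRec n (fun m' => F m' ω) m y)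
            = pr p (fun ω => rRec n (fun m' => F m' ω) (m + 1) x
                = rRec n (fun m' => F m' ω) (m + 1) y)) ∧
        (lsb (n - m) x = lsb (n - m) y →
          pr p (fun ω => rRec n (fun m' => F m' ω) m x = rRec n (fun m' => F m' ω) m y)
            = 1 / 2 ^ m + (1 - 1 / 2 ^ m) *
                pr p (fun ω => rRec n (fun m' => F m' ω) (m + 1) x
                  = rRec n (fun m' => F m' ω) (m + 1) y)) ∧
        (∀ x' y' : Fin n → Bool, x' ≠ y' →
          lsb (n - m) x' = lsb (n - m) x → lsb (n - m) y' = lsb (n - m) y →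
          pr p (fun ω => rRec n (fun m' => F m' ω) m x = rRec n (fun m' => F m' ω) m y)
            = pr p (fun ω => rRec n (fun m' => F m' ω) m x'
                = rRec n (fun m' => F m' ω) m y'))) :=
  statement5_general hp1 (ε := fun m => 1 / 2 ^ m) (fun m hm _ _ hxy =>
    pr_apply_eq_apply_of_pairwise
      (hFpair m (Finset.mem_Icc.1 hm).1 (Finset.mem_Icc.1 hm).2 _ _ hxy)) hInd
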